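/- Suppose u ∈ C²([0,∞)) is nonnegative with ∫₀^∞ u(x)dx = 1 and ∫₀^∞ x²u(x)dx < ∞, and that, with v(x) = ∫_x^∞ u(y)dy, u satisfies −[(bℓ v^{ℓ−1} − c₁)u]'(x) + a u''(x) = 0 for all x > 0 and the boundary condition (c₁ − bℓ)u(0) + a u'(0) = 0. Then u = u_stat on [0,∞). -/

import Mathlib

open MeasureTheory Set Filter

/-- The constant `c₁ = −λρ + b`. -/
noncomputable def cOne (lam b ρ : ℝ) : ℝ := -lam * ρ + b

/-- The constant `α = b / c₁`. -/
noncomputable def alphaStat (lam b ρ : ℝ) : ℝ := b / cOne lam b ρ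

/-- `w(x) = (1−α) e^{(c₁/a)(ℓ−1)x} + α`. -/
noncomputable def wStat (ℓ : ℕ) (lam a b ρ x : ℝ) : ℝ :=
  (1 - alphaStat lam b ρ) * Real.exp (cOne lam b ρ / a * ((ℓ:ℝ) - 1) * x)
    + alphaStat lam b ρ

/-- The stationary tail profile `v_stat(x) = w(x)^{−1/(ℓ−1)}`. -/
noncomputable def vStat (ℓ : ℕ) (lam a b ρ x : ℝ) : ℝ :=
  wStat ℓ lam a b ρ x ^ (-(1:ℝ) / ((ℓ:ℝ) - 1))

/-- The stationary density
`u_stat(x) = (c₁/a)(1−α) e^{(c₁/a)(ℓ−1)x} w(x)^{−ℓ/(ℓ−1)}`. -/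
noncomputable def uStat (ℓ : ℕ) (lam a b ρ x : ℝ) : ℝ :=
  (cOne lam b ρ / a) * (1 - alphaStat lam b ρ)
    * Real.exp (cOne lam b ρ / a * ((ℓ:ℝ) - 1) * x)
    * wStat ℓ lam a b ρ x ^ (-(ℓ:ℝ) / ((ℓ:ℝ) - 1))

/-!
With `q = bℓ v^{ℓ-1} - c₁`, the boundary condition says that the flux `a u' - q u`, which the
equation makes constant, vanishes at `0`, so `a u' = q u`. Since `u = -v'`, this integrates to
`a u + b v^ℓ - c₁ v = k`; as `v → 0`, the integrable function `a u` tends to `k`, hence `k = 0`.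
Thus `v` solves the Bernoulli equation `a v' = b v^ℓ - c₁ v` with `v(0) = 1`, whose only solution
is `v_stat`, and `a u_stat = c₁ v_stat - b v_stat^ℓ` recovers `u`.
-/

open scoped Topology

theorem eq_zero_of_integrableOn_Ici_of_tendsto {E : Type*} [NormedAddCommGroup E]
    {f : ℝ → E} {t : ℝ} {l : E} (hint : IntegrableOn f (Ici t))
    (hlim : Tendsto f atTop (𝓝 l)) : l = 0 := by
  refine IntegrableAtFilter.eq_zero_of_tendsto ⟨Ici t, Ici_mem_atTop t, hint⟩ (fun s hs => ?_) hlim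
  obtain ⟨r, hr⟩ := mem_atTop_sets.1 hs
  exact measure_mono_top hr Real.volume_Ici

section HalfLine

variable {E : Type*} [NormedAddCommGroup E] [NormedSpace ℝ E] {f g : ℝ → E} {t : ℝ}

theorem exists_eqOn_Ici_add_const_of_derivWithin_eqOn_Ioi
    (hf : DifferentiableOn ℝ f (Ici t)) (hg : DifferentiableOn ℝ g (Ici t))
    (hfg : EqOn (derivWithin f (Ici t)) (derivWithin g (Ici t)) (Ioi t)) :
    ∃ k, EqOn f (fun x => g x + k) (Ici t) := by
  have hderiv : EqOn (deriv f) (deriv g) (Ioi t) := fun x hx => by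
    simpa only [derivWithin_of_mem_nhds (Ici_mem_nhds (mem_Ioi.1 hx))] using hfg hx
  obtain ⟨k, hk⟩ := isOpen_Ioi.exists_eq_add_of_deriv_eq isPreconnected_Ioi
    (hf.mono Ioi_subset_Ici_self) (hg.mono Ioi_subset_Ici_self) hderiv
  exact ⟨k, hk.of_subset_closure hf.continuousOn (hg.continuousOn.add continuousOn_const)
    Ioi_subset_Ici_self (closure_Ioi t).ge⟩

theorem hasDerivWithinAt_integral_Ici [CompleteSpace E] (hint : IntegrableOn f (Ici t))
    (hf : ContinuousOn f (Ici t)) {x : ℝ} (hx : x ∈ Ici t) :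
    HasDerivWithinAt (fun y => ∫ z in Ici y, f z) (-f x) (Ici t) x := by
  have tail_eq : ∀ y ∈ Ici t, ∫ z in Ici y, f z = (∫ z in Ici t, f z) - ∫ z in t..y, f z :=
    fun y hy => by rw [← intervalIntegral.integral_Ici_sub_Ici' hint
      (hint.mono_set (Ici_subset_Ici.2 hy)), sub_sub_cancel]
  -- The fundamental theorem of calculus has `Icc` and `Ici x` versions, but none for `Ici t`.
  have hIcc : Icc t (x + 1) ∈ 𝓝[Ici t] x := by
    rw [← Ici_inter_Iic]
    exact inter_mem self_mem_nhdsWithin (mem_nhdsWithin_of_mem_nhds (Iic_mem_nhds (lt_add_one x)))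
  have hderiv : HasDerivWithinAt (fun y => ∫ z in t..y, f z) (f x) (Icc t (x + 1)) x := by
    have : Fact (x ∈ Icc t (x + 1)) := ⟨hx, (lt_add_one x).le⟩
    have hfx : ContinuousOn f (Icc t (x + 1)) := hf.mono Icc_subset_Ici_self
    exact intervalIntegral.integral_hasDerivWithinAt_right
      ((hf.mono Icc_subset_Ici_self).intervalIntegrable_of_Icc hx)
      (hfx.stronglyMeasurableAtFilter_nhdsWithin measurableSet_Icc x) (hfx x this.out)
  exact ((hderiv.mono_of_mem_nhdsWithin hIcc).const_sub _).congr tail_eq (tail_eq x hx)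

theorem eq_zero_of_hasDerivWithinAt_smul {q : ℝ → ℝ} (hq : ContinuousOn q (Ici t))
    (hf : ∀ x ∈ Ici t, HasDerivWithinAt f (q x • f x) (Ici t) x) (ht : f t = 0) :
    ∀ x ∈ Ici t, f x = 0 := by
  intro x hx
  obtain ⟨K, hK⟩ := isCompact_Icc.exists_bound_of_continuousOn
    (hq.mono (Icc_subset_Ici_self : Icc t x ⊆ Ici t))
  refine eq_zero_of_abs_deriv_le_mul_abs_self_of_eq_zero_right (K := K)
    (fun y hy => ((hf y hy.1).continuousWithinAt).mono Icc_subset_Ici_self)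
    (fun y hy => (hf y hy.1).mono (Ici_subset_Ici.2 hy.1)) ht (fun y hy => ?_) x ⟨hx, le_rfl⟩
  rw [norm_smul]
  gcongr
  exact hK y (Ico_subset_Icc_self hy)

end HalfLine

theorem pos_of_continuousOn_of_ne_zero {X : Type*} [TopologicalSpace X] {s : Set X} {f : X → ℝ}
    (hs : IsPreconnected s) (hf : ContinuousOn f s) (hne : ∀ x ∈ s, f x ≠ 0) {x y : X}
    (hx : x ∈ s) (hfx : 0 < f x) (hy : y ∈ s) : 0 < f y := by
  by_contra! hfy
  obtain ⟨z, hz, hfz⟩ := hs.intermediate_value hy hx hf ⟨hfy, hfx.le⟩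
  exact hne z hz hfz

section StationaryEquation

variable {a t : ℝ} {u v : ℝ → ℝ}

theorem mul_derivWithin_eq_of_stationary {q : ℝ → ℝ} (hq : DifferentiableOn ℝ q (Ici t))
    (hu : DifferentiableOn ℝ u (Ici t)) (hu' : DifferentiableOn ℝ (derivWithin u (Ici t)) (Ici t))
    (hode : ∀ x > t, -derivWithin (fun y => q y * u y) (Ici t) x
      + a * derivWithin (derivWithin u (Ici t)) (Ici t) x = 0)
    (hbc : a * derivWithin u (Ici t) t = q t * u t) :
    ∀ x ∈ Ici t, a * derivWithin u (Ici t) x = q x * u x := by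
  obtain ⟨k, hk⟩ := exists_eqOn_Ici_add_const_of_derivWithin_eqOn_Ioi
    (hu'.const_mul a) (hq.fun_mul hu) fun x hx => by
      rw [derivWithin_const_mul a (hu' x (mem_Ici_of_Ioi hx))]
      exact (neg_add_eq_zero.1 (hode x hx)).symm
  have hk0 : k = 0 := by
    linear_combination hbc - hk self_mem_Ici
  intro x hx
  simpa [hk0] using hk hx

theorem mul_eq_sub_of_mul_derivWithin_eq {Φ φ : ℝ → ℝ} {l : ℝ}
    (hΦ : ∀ y, HasDerivAt Φ (φ y) y) (hu : DifferentiableOn ℝ u (Ici t))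
    (hint : IntegrableOn u (Ici t)) (hv : ∀ x ∈ Ici t, HasDerivWithinAt v (-u x) (Ici t) x)
    (hlim : Tendsto v atTop (𝓝 l))
    (hflux : ∀ x ∈ Ici t, a * derivWithin u (Ici t) x = φ (v x) * u x) :
    ∀ x ∈ Ici t, a * u x = Φ l - Φ (v x) := by
  have hΦv : ∀ x ∈ Ici t, HasDerivWithinAt (fun y => -Φ (v y)) (φ (v x) * u x) (Ici t) x :=
    fun x hx => ((hΦ (v x)).comp_hasDerivWithinAt x (hv x hx)).neg.congr_deriv (by ring)
  obtain ⟨k, hk⟩ := exists_eqOn_Ici_add_const_of_derivWithin_eqOn_Ioi (hu.const_mul a)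
    (fun x hx => (hΦv x hx).differentiableWithinAt) fun x hx => by
      have hx' := mem_Ici_of_Ioi hx
      rw [derivWithin_const_mul a (hu x hx'), hflux x hx',
        (hΦv x hx').derivWithin (uniqueDiffOn_Ici t x hx')]
  have hau : Tendsto (fun x => a * u x) atTop (𝓝 (-Φ l + k)) := by
    refine ((((hΦ l).continuousAt.tendsto.comp hlim).neg).add_const k).congr' ?_
    filter_upwards [Ici_mem_atTop t] with x hx using (hk hx).symm
  have hk0 : -Φ l + k = 0 := eq_zero_of_integrableOn_Ici_of_tendsto (hint.const_mul a) hau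
  intro x hx
  linear_combination hk hx + hk0

/-- The Bernoulli substitution: `v⁻ⁿ` solves a linear equation, and the second factor is its
solution multiplied by `v(t)ⁿ`. Stated as a product, the identity also rules out zeros of `v`. -/
theorem pow_mul_eq_of_bernoulli {κ β : ℝ} (hκ : κ ≠ 0) (n : ℕ)
    (hv : ∀ x ∈ Ici t, HasDerivWithinAt v (β * v x ^ (n + 1) - κ * v x) (Ici t) x) :
    ∀ x ∈ Ici t, v x ^ n * ((1 - β / κ * v t ^ n) * Real.exp (κ * n * (x - t)) + β / κ * v t ^ n)
      = v t ^ n := by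
  set A := β / κ * v t ^ n with hA
  set W : ℝ → ℝ := fun x => (1 - A) * Real.exp (κ * n * (x - t)) + A with hW
  have hWderiv : ∀ x, HasDerivAt W (κ * n * (W x - A)) x := fun x => by
    have hlin : HasDerivAt (fun y => κ * n * (y - t)) (κ * n * 1) x :=
      ((hasDerivAt_id x).sub_const t).const_mul (κ * n)
    exact ((hlin.exp.const_mul (1 - A)).add_const A).congr_deriv (by simp only [hW]; ring)
  have hp : ∀ x ∈ Ici t, HasDerivWithinAt (fun y => v y ^ n * W y - v t ^ n)
      ((n * β * v x ^ n) • (v x ^ n * W x - v t ^ n)) (Ici t) x := fun x hx => by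
    refine ((((hv x hx).pow n).mul (hWderiv x).hasDerivWithinAt).sub_const _).congr_deriv ?_
    have hκA : κ * A = β * v t ^ n := by rw [hA]; field_simp
    rcases n with _ | n
    · simp
    · simp only [Nat.add_sub_cancel, smul_eq_mul, Pi.pow_apply]
      linear_combination (-(v x ^ (n + 1) * ((n + 1 : ℕ) : ℝ))) * hκA
  have hvc : ContinuousOn v (Ici t) := fun x hx => (hv x hx).continuousWithinAt
  intro x hx
  refine sub_eq_zero.1 (eq_zero_of_hasDerivWithinAt_smul (by fun_prop) hp ?_ x hx)
  simp [hW]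

end StationaryEquation

section StationaryProfile

variable {ℓ : ℕ} {lam a b ρ x : ℝ}

theorem cOne_pos (hlam : 0 ≤ lam) (hb : 0 < b) (hρ : ρ ≤ 0) : 0 < cOne lam b ρ :=
  add_pos_of_nonneg_of_pos (mul_nonneg_of_nonpos_of_nonpos (neg_nonpos.2 hlam) hρ) hb

theorem eq_vStat_of_pow_mul_wStat_eq_one (hℓ : 2 ≤ ℓ) {y : ℝ} (hy : 0 ≤ y)
    (h : y ^ (ℓ - 1) * wStat ℓ lam a b ρ x = 1) : y = vStat ℓ lam a b ρ x := by
  have hw : wStat ℓ lam a b ρ x = (y ^ (ℓ - 1))⁻¹ := eq_inv_of_mul_eq_one_right h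
  rw [vStat, hw, neg_div, Real.rpow_neg (by positivity), Real.inv_rpow (by positivity), inv_inv,
    one_div, ← Nat.cast_pred (by omega), Real.pow_rpow_inv_natCast hy (by omega)]

theorem vStat_pow (hw : 0 ≤ wStat ℓ lam a b ρ x) :
    vStat ℓ lam a b ρ x ^ ℓ = wStat ℓ lam a b ρ x ^ (-(ℓ : ℝ) / ((ℓ : ℝ) - 1)) := by
  rw [vStat, ← Real.rpow_mul_natCast hw]
  congr 1
  ring

theorem vStat_pow_mul_wStat (hℓ : 2 ≤ ℓ) (hw : 0 < wStat ℓ lam a b ρ x) :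
    vStat ℓ lam a b ρ x ^ ℓ * wStat ℓ lam a b ρ x = vStat ℓ lam a b ρ x := by
  have hℓ1 : (ℓ : ℝ) - 1 ≠ 0 := sub_ne_zero.2 (Nat.cast_ne_one.2 (by omega))
  rw [vStat_pow hw.le, ← Real.rpow_add_one hw.ne', vStat]
  congr 1
  field_simp
  ring

theorem uStat_eq_mul_vStat_pow (hw : 0 ≤ wStat ℓ lam a b ρ x) :
    uStat ℓ lam a b ρ x = cOne lam b ρ / a
      * (wStat ℓ lam a b ρ x - alphaStat lam b ρ) * vStat ℓ lam a b ρ x ^ ℓ := by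
  have hexp : wStat ℓ lam a b ρ x - alphaStat lam b ρ
      = (1 - alphaStat lam b ρ) * Real.exp (cOne lam b ρ / a * ((ℓ : ℝ) - 1) * x) :=
    add_sub_cancel_right _ _
  rw [vStat_pow hw, hexp, uStat, ← mul_assoc]

theorem mul_uStat (hℓ : 2 ≤ ℓ) (ha : a ≠ 0) (hc : cOne lam b ρ ≠ 0)
    (hw : 0 < wStat ℓ lam a b ρ x) :
    a * uStat ℓ lam a b ρ x
      = cOne lam b ρ * vStat ℓ lam a b ρ x - b * vStat ℓ lam a b ρ x ^ ℓ := by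
  have hα : alphaStat lam b ρ * cOne lam b ρ = b := div_mul_cancel₀ b hc
  rw [uStat_eq_mul_vStat_pow hw.le]
  field_simp
  linear_combination cOne lam b ρ * vStat_pow_mul_wStat hℓ hw - vStat ℓ lam a b ρ x ^ ℓ * hα

theorem eq_vStat_of_bernoulli (hℓ : 2 ≤ ℓ) (ha : a ≠ 0) (hc : cOne lam b ρ ≠ 0) {v : ℝ → ℝ}
    (hv : ∀ x ∈ Ici 0,
      HasDerivWithinAt v (b / a * v x ^ ℓ - cOne lam b ρ / a * v x) (Ici 0) x)
    (hv0 : v 0 = 1) (hx : x ∈ Ici 0) :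
    0 < wStat ℓ lam a b ρ x ∧ v x = vStat ℓ lam a b ρ x := by
  have hpow : ∀ y ∈ Ici 0, v y ^ (ℓ - 1) * wStat ℓ lam a b ρ y = 1 := fun y hy => by
    rw [← Nat.sub_add_cancel (one_le_two.trans hℓ)] at hv
    have h := pow_mul_eq_of_bernoulli (div_ne_zero hc ha) (ℓ - 1) hv y hy
    rwa [div_div_div_cancel_right₀ ha, hv0, one_pow, mul_one, sub_zero,
      Nat.cast_pred (by omega)] at h
  have hne : ∀ y ∈ Ici 0, v y ≠ 0 := fun y hy h0 => by
    simpa [h0, show ℓ - 1 ≠ 0 by omega] using hpow y hy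
  have hpos : 0 < v x :=
    pos_of_continuousOn_of_ne_zero isPreconnected_Ici (fun y hy => (hv y hy).continuousWithinAt)
      hne self_mem_Ici (hv0 ▸ one_pos) hx
  exact ⟨pos_of_mul_pos_right ((hpow x hx).symm ▸ one_pos) (pow_nonneg hpos.le _),
    eq_vStat_of_pow_mul_wStat_eq_one hℓ hpos.le (hpow x hx)⟩

end StationaryProfile

theorem stationary_solution_unique_general
    (ℓ : ℕ) (hℓ : 2 ≤ ℓ) (lam a b ρ : ℝ) (ha : a ≠ 0) (hc : cOne lam b ρ ≠ 0)
    (u : ℝ → ℝ)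
    (hu : DifferentiableOn ℝ u (Ici 0)) (hu' : DifferentiableOn ℝ (derivWithin u (Ici 0)) (Ici 0))
    (hint : IntegrableOn u (Ici (0 : ℝ)))
    (hmass : (∫ x in Ici (0 : ℝ), u x) = 1)
    (hode : ∀ x > (0 : ℝ),
      -(derivWithin (fun y =>
          (b * (ℓ : ℝ) * (∫ z in Ici y, u z) ^ (ℓ - 1) - cOne lam b ρ) * u y)
          (Ici (0 : ℝ)) x)
        + a * derivWithin (derivWithin u (Ici (0 : ℝ))) (Ici (0 : ℝ)) x = 0)
    (hbc : (cOne lam b ρ - b * (ℓ : ℝ)) * u 0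
      + a * derivWithin u (Ici (0 : ℝ)) 0 = 0) :
    ∀ x ≥ (0 : ℝ), u x = uStat ℓ lam a b ρ x := by
  set c := cOne lam b ρ
  set v : ℝ → ℝ := fun y => ∫ z in Ici y, u z
  have hv : ∀ x ∈ Ici 0, HasDerivWithinAt v (-u x) (Ici 0) x := fun x =>
    hasDerivWithinAt_integral_Ici hint hu.continuousOn
  have hvdiff : DifferentiableOn ℝ v (Ici 0) := fun x hx => (hv x hx).differentiableWithinAt
  have hflux : ∀ x ∈ Ici 0,
      a * derivWithin u (Ici 0) x = (b * ℓ * v x ^ (ℓ - 1) - c) * u x :=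
    mul_derivWithin_eq_of_stationary (by fun_prop) hu hu' hode (by
      rw [show v 0 = 1 from hmass, one_pow]
      linear_combination hbc)
  have hΦ : ∀ y, HasDerivAt (fun y => b * y ^ ℓ - c * y) (b * ℓ * y ^ (ℓ - 1) - c) y := fun y =>
    (((hasDerivAt_pow ℓ y).const_mul b).sub ((hasDerivAt_id y).const_mul c)).congr_deriv (by ring)
  have hau : ∀ x ∈ Ici 0, a * u x = c * v x - b * v x ^ ℓ := fun x hx => by
    simpa [show ℓ ≠ 0 by omega] using
      mul_eq_sub_of_mul_derivWithin_eq hΦ hu hint hv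
        (tendsto_integral_Ici_zero tendsto_id) hflux x hx
  have hbern : ∀ x ∈ Ici 0, HasDerivWithinAt v (b / a * v x ^ ℓ - c / a * v x) (Ici 0) x :=
    fun x hx => (hv x hx).congr_deriv (by
      field_simp
      linear_combination -hau x hx)
  intro x hx
  obtain ⟨hw, hvx⟩ := eq_vStat_of_bernoulli hℓ ha hc hbern hmass hx
  exact mul_left_cancel₀ ha ((hau x hx).trans (by rw [hvx, mul_uStat hℓ ha hc hw]))

/-- Uniqueness of the stationary solution: any nonnegative `C²([0,∞))` probability
density `u` with finite second moment satisfying, with `v(x) = ∫_x^∞ u(y)dy`, the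
stationary equation `−[(bℓ v^{ℓ−1} − c₁)u]' + a u'' = 0` on `(0,∞)` and the boundary
condition `(c₁ − bℓ)u(0) + a u'(0) = 0`, coincides with `u_stat` on `[0,∞)`. -/
theorem stationary_solution_unique
    (ℓ : ℕ) (hℓ : 2 ≤ ℓ) (lam a b ρ : ℝ)
    (hlam : 0 < lam) (ha : 0 < a) (hb : 0 < b) (hρ : ρ < 0)
    (u : ℝ → ℝ)
    (hreg : ContDiffOn ℝ 2 u (Ici (0:ℝ)))
    (hpos : ∀ x ≥ (0:ℝ), 0 ≤ u x)
    (hint : IntegrableOn u (Ici (0:ℝ)))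
    (hmass : (∫ x in Ici (0:ℝ), u x) = 1)
    (hmom : IntegrableOn (fun x => x ^ 2 * u x) (Ici (0:ℝ)))
    (hode : ∀ x > (0:ℝ),
      -(derivWithin (fun y =>
          (b * (ℓ:ℝ) * (∫ z in Ici y, u z) ^ (ℓ - 1) - cOne lam b ρ) * u y)
          (Ici (0:ℝ)) x)
        + a * derivWithin (derivWithin u (Ici (0:ℝ))) (Ici (0:ℝ)) x = 0)
    (hbc : (cOne lam b ρ - b * (ℓ:ℝ)) * u 0
      + a * derivWithin u (Ici (0:ℝ)) 0 = 0) :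
    ∀ x ≥ (0:ℝ), u x = uStat ℓ lam a b ρ x := by
  exact stationary_solution_unique_general ℓ hℓ lam a b ρ ha.ne'
    (cOne_pos hlam.le hb hρ.le).ne' u (hreg.differentiableOn two_ne_zero)
    ((hreg.derivWithin (uniqueDiffOn_Ici 0) one_add_one_eq_two.le).differentiableOn one_ne_zero)
    hint hmass hode hbc
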